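/- arXiv:1709.00524 — 2 statements merged into one kernel-verified Lean document; each statement's English description precedes it below -/
import Mathlib

section
/- Let x be a real number and let α, ω₁, ω₂ be pairwise distinct complex numbers satisfying α+ω₁+ω₂ = x², αω₁+αω₂+ω₁ω₂ = -x, and αω₁ω₂ = 1, and set α̲ = 1 + α·i + α²·j + α³·k, ω̲₁ = 1 + ω₁·i + ω₁²·j + ω₁³·k, ω̲₂ = 1 + ω₂·i + ω₂²·j + ω₂³·k in the quaternion algebra over ℂ. Then for every complex number y, the series ∑_{n≥0} (yⁿ/n!)·Q_{T,n}(x) converges (has sum) to (α·e^{αy}/((α-ω₁)(α-ω₂)))·α̲ - (ω₁·e^{ω₁y}/((α-ω₁)(ω₁-ω₂)))·ω̲₁ + (ω₂·e^{ω₂y}/((α-ω₂)(ω₁-ω₂)))·ω̲₂. -/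
/-- Tribonacci polynomials: T₀=0, T₁=1, T₂=x², Tₙ₊₃ = x²Tₙ₊₂ + xTₙ₊₁ + Tₙ. -/
def Trib (x : ℝ) : ℕ → ℝ
  | 0 => 0
  | 1 => 1
  | 2 => x ^ 2
  | n + 3 => x ^ 2 * Trib x (n + 2) + x * Trib x (n + 1) + Trib x n

/-- Tribonacci quaternion polynomials Q_{T,n}(x). -/
noncomputable def QT (x : ℝ) (n : ℕ) : Quaternion ℝ :=
  ⟨Trib x n, Trib x (n + 1), Trib x (n + 2), Trib x (n + 3)⟩

/-- Tribonacci quaternion polynomials regarded in the quaternion algebra over ℂ. -/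
noncomputable def QTC (x : ℝ) (n : ℕ) : Quaternion ℂ :=
  ⟨(Trib x n : ℂ), (Trib x (n + 1) : ℂ), (Trib x (n + 2) : ℂ), (Trib x (n + 3) : ℂ)⟩

/-- The quaternion 1 + a·i + a²·j + a³·k over ℂ. -/
def uq (a : ℂ) : Quaternion ℂ := ⟨1, a, a ^ 2, a ^ 3⟩

/-- The natural (componentwise) topology on the quaternion algebra over ℂ. -/
noncomputable instance : TopologicalSpace (Quaternion ℂ) :=
  TopologicalSpace.induced (fun q => (q.re, q.imI, q.imJ, q.imK)) inferInstance

/-!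
A solution of a linear recurrence is determined by its initial values, so `Trib x n` is a
combination of `α ^ n`, `ω₁ ^ n`, `ω₂ ^ n` (Binet's formula). Shifting the index by `m` multiplies
the term in `t ^ n` by `t ^ m`, so the same formula holds for the quaternions `QTC x n`, with the
coefficient of `t ^ n` multiplied by `uq t`. The weights `y ^ n / n!` then turn each geometric
sequence `t ^ n` into `exp (t * y)`.
-/

section CubicRecurrence

variable {R : Type*} [CommRing R] {a b c : R}

/-- The linear recurrence of order three with characteristic polynomial `(X - a)(X - b)(X - c)`,
whose solutions have Binet formulas in `a ^ n`, `b ^ n`, `c ^ n`. As always in `LinearRecurrence`,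
the coefficients are listed from the lowest index up. -/
def cubicRecurrence (a b c : R) : LinearRecurrence R :=
  ⟨3, ![a * b * c, -(a * b + a * c + b * c), a + b + c]⟩

theorem isSolution_cubicRecurrence_iff {u : ℕ → R} :
    (cubicRecurrence a b c).IsSolution u ↔ ∀ n, u (n + 3) =
      a * b * c * u n + -(a * b + a * c + b * c) * u (n + 1) + (a + b + c) * u (n + 2) :=
  forall_congr' fun _ ↦ Eq.congr_right (Fin.sum_univ_three _)

theorem isSolution_cubicRecurrence_pow {t : R} (ht : (t - a) * (t - b) * (t - c) = 0) :
    (cubicRecurrence a b c).IsSolution (t ^ ·) :=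
  isSolution_cubicRecurrence_iff.2 fun n ↦ by linear_combination t ^ n * ht

theorem eq_binet_of_isSolution_cubicRecurrence {K : Type*} [Field K] {a b c : K}
    (hab : a ≠ b) (hac : a ≠ c) (hbc : b ≠ c) {u : ℕ → K}
    (hu : (cubicRecurrence a b c).IsSolution u)
    (h0 : u 0 = 0) (h1 : u 1 = 1) (h2 : u 2 = a + b + c) (n : ℕ) :
    u n = a / ((a - b) * (a - c)) * a ^ n - b / ((a - b) * (b - c)) * b ^ n
      + c / ((a - c) * (b - c)) * c ^ n := by
  let E := cubicRecurrence a b c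
  let v : ℕ → K := (a / ((a - b) * (a - c))) • (a ^ ·) - (b / ((a - b) * (b - c))) • (b ^ ·)
    + (c / ((a - c) * (b - c))) • (c ^ ·)
  have hv : v ∈ E.solSpace := by
    have hgeom {t : K} (ht : (t - a) * (t - b) * (t - c) = 0) (r : K) :
        r • (t ^ · : ℕ → K) ∈ E.solSpace :=
      E.solSpace.smul_mem r (isSolution_cubicRecurrence_pow ht)
    exact add_mem (sub_mem (hgeom (by ring) _) (hgeom (by ring) _)) (hgeom (by ring) _)
  have hinit : Set.EqOn u v (Finset.range 3) := by
    have hab' := sub_ne_zero.2 hab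
    have hac' := sub_ne_zero.2 hac
    have hbc' := sub_ne_zero.2 hbc
    intro k hk
    have hk : k < 3 := Finset.mem_range.1 hk
    interval_cases k <;>
      simp only [h0, h1, h2, v, Pi.add_apply, Pi.sub_apply, Pi.smul_apply, smul_eq_mul] <;>
      field_simp <;> ring
  exact congrFun ((E.eq_iff_eqOn_range_order u v hu hv).2 hinit) n

end CubicRecurrence

section Tribonacci

variable {x : ℝ} {α ω₁ ω₂ : ℂ} (hαω₁ : α ≠ ω₁) (hαω₂ : α ≠ ω₂) (hω₁ω₂ : ω₁ ≠ ω₂)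
  (hsum : α + ω₁ + ω₂ = (x : ℂ) ^ 2) (hsum2 : α * ω₁ + α * ω₂ + ω₁ * ω₂ = -(x : ℂ))
  (hprod : α * ω₁ * ω₂ = 1)

include hsum hsum2 hprod

theorem isSolution_cubicRecurrence_trib :
    (cubicRecurrence α ω₁ ω₂).IsSolution (fun n ↦ (Trib x n : ℂ)) := by
  rw [isSolution_cubicRecurrence_iff, hsum, hsum2, hprod]
  intro n
  rw [Trib]
  push_cast
  ring

include hαω₁ hαω₂ hω₁ω₂

theorem trib_eq_binet (n : ℕ) :
    (Trib x n : ℂ) = α / ((α - ω₁) * (α - ω₂)) * α ^ n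
      - ω₁ / ((α - ω₁) * (ω₁ - ω₂)) * ω₁ ^ n + ω₂ / ((α - ω₂) * (ω₁ - ω₂)) * ω₂ ^ n :=
  eq_binet_of_isSolution_cubicRecurrence hαω₁ hαω₂ hω₁ω₂
    (isSolution_cubicRecurrence_trib hsum hsum2 hprod)
    (by simp [Trib]) (by simp [Trib]) (by simp [Trib, hsum]) n

theorem QTC_eq_binet (n : ℕ) :
    QTC x n = α ^ n • (α / ((α - ω₁) * (α - ω₂))) • uq α
      - ω₁ ^ n • (ω₁ / ((α - ω₁) * (ω₁ - ω₂))) • uq ω₁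
      + ω₂ ^ n • (ω₂ / ((α - ω₂) * (ω₁ - ω₂))) • uq ω₂ := by
  ext <;>
    simp only [QTC, trib_eq_binet hαω₁ hαω₂ hω₁ω₂ hsum hsum2 hprod, Quaternion.re_add,
      Quaternion.re_sub, Quaternion.re_smul, Quaternion.imI_add, Quaternion.imI_sub,
      Quaternion.imI_smul, Quaternion.imJ_add, Quaternion.imJ_sub, Quaternion.imJ_smul,
      Quaternion.imK_add, Quaternion.imK_sub, Quaternion.imK_smul, smul_eq_mul] <;>
    simp only [uq] <;>
    ring

end Tribonacci

/-- The coordinates of a quaternion over `ℂ` as a linear map. The target is the iterated product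
that induces the topology on `Quaternion ℂ`, which transfers its topological module structure. -/
def quaternionCoords : Quaternion ℂ →ₗ[ℂ] ℂ × ℂ × ℂ × ℂ where
  toFun q := (q.re, q.imI, q.imJ, q.imK)
  map_add' _ _ := rfl
  map_smul' _ _ := rfl

instance : IsTopologicalAddGroup (Quaternion ℂ) :=
  topologicalAddGroup_induced quaternionCoords

instance : ContinuousSMul ℂ (Quaternion ℂ) :=
  continuousSMul_induced quaternionCoords

theorem hasSum_pow_div_factorial_smul_pow_smul {𝕜 E : Type*} [NormedField 𝕜] [NormedAlgebra ℚ 𝕜]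
    [CompleteSpace 𝕜] [AddCommMonoid E] [Module 𝕜 E] [TopologicalSpace E] [ContinuousSMul 𝕜 E]
    (y a : 𝕜) (v : E) :
    HasSum (fun n : ℕ ↦ (y ^ n / n.factorial) • a ^ n • v) (NormedSpace.exp (a * y) • v) := by
  convert (NormedSpace.expSeries_div_hasSum_exp (a * y)).smul_const v using 2 with n
  rw [smul_smul, mul_pow, mul_comm, mul_div_assoc]

/-- exponential generating function of the Tribonacci quaternion polynomials. -/
theorem tribonacci_quaternion_exp_generating_function (x : ℝ) (α ω₁ ω₂ : ℂ)
    (hαω₁ : α ≠ ω₁) (hαω₂ : α ≠ ω₂) (hω₁ω₂ : ω₁ ≠ ω₂)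
    (hsum : α + ω₁ + ω₂ = (x : ℂ) ^ 2)
    (hsum2 : α * ω₁ + α * ω₂ + ω₁ * ω₂ = -(x : ℂ))
    (hprod : α * ω₁ * ω₂ = 1) (y : ℂ) :
    HasSum (fun n : ℕ => (y ^ n / n.factorial) • QTC x n)
      ((α * Complex.exp (α * y) / ((α - ω₁) * (α - ω₂))) • uq α
        - (ω₁ * Complex.exp (ω₁ * y) / ((α - ω₁) * (ω₁ - ω₂))) • uq ω₁
        + (ω₂ * Complex.exp (ω₂ * y) / ((α - ω₂) * (ω₁ - ω₂))) • uq ω₂) := by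
  have hexp := hasSum_pow_div_factorial_smul_pow_smul (E := Quaternion ℂ) y
  have hbinet := ((hexp α ((α / ((α - ω₁) * (α - ω₂))) • uq α)).sub
    (hexp ω₁ ((ω₁ / ((α - ω₁) * (ω₁ - ω₂))) • uq ω₁))).add
    (hexp ω₂ ((ω₂ / ((α - ω₂) * (ω₁ - ω₂))) • uq ω₂))
  have hcoeff (a d : ℂ) : Complex.exp (a * y) * (a / d) = a * Complex.exp (a * y) / d := by ring
  simp only [← smul_sub, ← smul_add, ← QTC_eq_binet hαω₁ hαω₂ hω₁ω₂ hsum hsum2 hprod] at hbinet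
  simpa only [← Complex.exp_eq_exp_ℂ, smul_smul _ (_ / _), hcoeff] using hbinet
end

section
/- For every real number x, let S(x) be the 3×3 matrix over the real quaternions ℍ with rows (x², x, 1), (1, 0, 0), (0, 1, 0) (real entries regarded as scalar quaternions), and let Q_S(x) be the 3×3 matrix over ℍ with rows (Q_{T,4}(x), x·Q_{T,3}(x)+Q_{T,2}(x), Q_{T,3}(x)), (Q_{T,3}(x), x·Q_{T,2}(x)+Q_{T,1}(x), Q_{T,2}(x)), (Q_{T,2}(x), x·Q_{T,1}(x)+Q_{T,0}(x), Q_{T,1}(x)). Then for every natural number n, the matrix product Q_S(x)·S(x)ⁿ equals the 3×3 matrix with rows (Q_{T,n+4}(x), x·Q_{T,n+3}(x)+Q_{T,n+2}(x), Q_{T,n+3}(x)), (Q_{T,n+3}(x), x·Q_{T,n+2}(x)+Q_{T,n+1}(x), Q_{T,n+2}(x)), (Q_{T,n+2}(x), x·Q_{T,n+1}(x)+Q_{T,n}(x), Q_{T,n+1}(x)). -/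
/-- The S(x)-matrix, with real entries regarded as scalar quaternions. -/
noncomputable def Smat (x : ℝ) : Matrix (Fin 3) (Fin 3) (Quaternion ℝ) :=
  !![((x ^ 2 : ℝ) : Quaternion ℝ), ((x : ℝ) : Quaternion ℝ), 1; 1, 0, 0; 0, 1, 0]

/-- The Tribonacci quaternion polynomial matrix Q_S(x). -/
noncomputable def QSmat (x : ℝ) : Matrix (Fin 3) (Fin 3) (Quaternion ℝ) :=
  !![QT x 4, x • QT x 3 + QT x 2, QT x 3;
     QT x 3, x • QT x 2 + QT x 1, QT x 2;
     QT x 2, x • QT x 1 + QT x 0, QT x 1]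

/-! The rows of `Q_S(x)` evolve independently under right multiplication by `S(x)`. If `u`
satisfies a third-order recurrence with coefficients `a`, `b`, `c` acting on the right, the row
`(uₘ₊₂, uₘ₊₁ b + uₘ c, uₘ₊₁ c)` is carried to the one with `m + 1` by the companion matrix of the
recurrence. The quaternions `Q_{T,n}(x)` inherit the Tribonacci recurrence coordinatewise, and the
three rows of `Q_S(x)` are those with `m = 2, 1, 0`. -/

open Matrix

section ThirdOrderRecurrence

variable {R : Type*} [Semiring R]

/-- The companion matrix of the recurrence `uₙ₊₃ = uₙ₊₂ a + uₙ₊₁ b + uₙ c`, with the coefficients in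
the first row as in `S(x)`. -/
def companionMatrix (a b c : R) : Matrix (Fin 3) (Fin 3) R :=
  !![a, b, c; 1, 0, 0; 0, 1, 0]

/-- The state at time `n` of the recurrence `uₙ₊₃ = uₙ₊₂ a + uₙ₊₁ b + uₙ c`, on which
`companionMatrix a b c` acts from the right: the term `uₙ₊₂`, followed by the joint
contributions of `uₙ` and `uₙ₊₁` to the terms `uₙ₊₃` and `uₙ₊₄`. -/
def stateRow (b c : R) (u : ℕ → R) (n : ℕ) : Fin 3 → R :=
  ![u (n + 2), u (n + 1) * b + u n * c, u (n + 1) * c]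

variable {a b c : R} {u : ℕ → R}

theorem stateRow_vecMul_companionMatrix {n : ℕ}
    (hu : u (n + 3) = u (n + 2) * a + u (n + 1) * b + u n * c) :
    stateRow b c u n ᵥ* companionMatrix a b c = stateRow b c u (n + 1) := by
  ext j
  fin_cases j <;>
    simp [stateRow, companionMatrix, vecMul, dotProduct, Fin.sum_univ_three, hu, add_assoc]

theorem stateRow_vecMul_companionMatrix_pow
    (hu : ∀ n, u (n + 3) = u (n + 2) * a + u (n + 1) * b + u n * c) (m n : ℕ) :
    stateRow b c u m ᵥ* companionMatrix a b c ^ n = stateRow b c u (n + m) := by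
  induction n with
  | zero => simp
  | succ n ih =>
    rw [pow_succ, ← vecMul_vecMul, ih, stateRow_vecMul_companionMatrix (hu _), Nat.add_right_comm]

end ThirdOrderRecurrence

theorem Trib_add_three (x : ℝ) (n : ℕ) :
    Trib x (n + 3) = x ^ 2 * Trib x (n + 2) + x * Trib x (n + 1) + Trib x n := by
  rw [Trib]

theorem QT_add_three (x : ℝ) (n : ℕ) :
    QT x (n + 3) = x ^ 2 • QT x (n + 2) + x • QT x (n + 1) + QT x n :=
  Quaternion.ext _ _ (Trib_add_three x n) (Trib_add_three x (n + 1)) (Trib_add_three x (n + 2))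
    (Trib_add_three x (n + 3))

theorem stateRow_QT (x : ℝ) (n : ℕ) :
    stateRow (x : Quaternion ℝ) 1 (QT x) n =
      ![QT x (n + 2), x • QT x (n + 1) + QT x n, QT x (n + 1)] := by
  simp only [stateRow, Quaternion.mul_coe_eq_smul, mul_one]

theorem Smat_eq_companionMatrix (x : ℝ) :
    Smat x = companionMatrix ((x ^ 2 : ℝ) : Quaternion ℝ) (x : Quaternion ℝ) 1 :=
  rfl

theorem stateRow_QT_vecMul_Smat_pow (x : ℝ) (m n : ℕ) :
    stateRow (x : Quaternion ℝ) 1 (QT x) m ᵥ* Smat x ^ n =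
      stateRow (x : Quaternion ℝ) 1 (QT x) (n + m) := by
  rw [Smat_eq_companionMatrix]
  refine stateRow_vecMul_companionMatrix_pow (fun k ↦ ?_) m n
  simp only [Quaternion.mul_coe_eq_smul, mul_one, QT_add_three]

/-- `Q_S(x)·S(x)ⁿ` is given by shifted Tribonacci quaternion polynomials. -/
theorem tribonacci_quaternion_matrix_identity (x : ℝ) (n : ℕ) :
    QSmat x * Smat x ^ n
      = !![QT x (n + 4), x • QT x (n + 3) + QT x (n + 2), QT x (n + 3);
           QT x (n + 3), x • QT x (n + 2) + QT x (n + 1), QT x (n + 2);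
           QT x (n + 2), x • QT x (n + 1) + QT x n, QT x (n + 1)] := by
  have row_mul (m : ℕ) :
      ![QT x (m + 2), x • QT x (m + 1) + QT x m, QT x (m + 1)] ᵥ* Smat x ^ n =
        ![QT x (n + m + 2), x • QT x (n + m + 1) + QT x (n + m), QT x (n + m + 1)] := by
    simpa only [stateRow_QT] using stateRow_QT_vecMul_Smat_pow x m n
  funext i
  rw [mul_apply_eq_vecMul]
  fin_cases i
  · exact row_mul 2
  · exact row_mul 1
  · exact row_mul 0
end
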